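/- arXiv:1604.06708 — 5 statements merged into one kernel-verified Lean document; each statement's English description precedes it below -/
import Mathlib

section
/- Let $c_0 < 0$ be a real number and define, for integers $m \ge n \ge 0$, $\mu_0^{m,n}(c_0) = (-c_0)^n \sum_{k=0}^{m-n} \binom{n-1+k}{k}(1+c_0)^k$ (with the convention $\mu_0^{m,0}(c_0) = 1$, coming from the generalized binomial coefficient $\binom{k-1}{k}$ which equals $1$ for $k=0$ and $0$ for $k \ge 1$). Then for every real $t$ with $-1 < t < -\tfrac{2}{c_0} - 1$, the limit $\lim_{m\to\infty} \sum_{n=0}^{m} \mu_0^{m,n}(c_0)\,(-t)^n$ exists and equals $\tfrac{1}{1+t}$. -/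
open Filter Finset

/-- HAM coefficient `μ₀^{m,n}(c₀)`, with the convention `μ₀^{m,0}(c₀) = 1`. -/
noncomputable def mu0 (c0 : ℝ) (m n : ℕ) : ℝ :=
  if n = 0 then 1
  else (-c0) ^ n * ∑ k ∈ Finset.range (m - n + 1), ((n - 1 + k).choose k : ℝ) * (1 + c0) ^ k

lemma ham_partial (c0 t : ℝ) (m : ℕ) :
    ∑ n ∈ Finset.range (m + 1), mu0 c0 m n * (-t) ^ n
      = 1 + (c0 * t) * ∑ j ∈ Finset.range m, (c0 * t + (1 + c0)) ^ j := by
  have h2 : ∑ j ∈ Finset.range m, (c0 * t + (1 + c0)) ^ j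
      = ∑ n ∈ Finset.range m, ∑ k ∈ Finset.range (m - n),
        (c0 * t) ^ n * (1 + c0) ^ k * ((n + k).choose k : ℝ) := by
    rw [← Finset.sum_range_diag_flip m
      (fun n k => (c0 * t) ^ n * (1 + c0) ^ k * ((n + k).choose k : ℝ))]
    refine Finset.sum_congr rfl fun j _ => ?_
    rw [add_pow]
    refine Finset.sum_congr rfl fun k hk => ?_
    have hk' : k ≤ j := by
      have := Finset.mem_range.1 hk
      omega
    rw [Nat.add_sub_cancel' hk', Nat.choose_symm hk']
  rw [h2, Finset.sum_range_succ', Finset.mul_sum, add_comm]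
  congr 1
  · simp [mu0]
  refine Finset.sum_congr rfl fun n hn => ?_
  have hn' := Finset.mem_range.1 hn
  have e : m - (n + 1) + 1 = m - n := by omega
  simp only [mu0, e, Nat.add_sub_cancel, Nat.succ_ne_zero, if_false]
  rw [Finset.mul_sum, Finset.mul_sum, Finset.sum_mul]
  refine Finset.sum_congr rfl fun k _ => ?_
  have : c0 * t = (-c0) * (-t) := by ring
  rw [this, mul_pow]
  ring

theorem ham_series_converges_of_c0_neg (c0 : ℝ) (hc0 : c0 < 0) (t : ℝ)
    (ht1 : -1 < t) (ht2 : t < -2 / c0 - 1) :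
    Tendsto (fun m : ℕ => ∑ n ∈ Finset.range (m + 1), mu0 c0 m n * (-t) ^ n)
      atTop (nhds (1 / (1 + t))) := by
  simp_rw [ham_partial]
  have h1 : c0 * (1 + t) < 0 := mul_neg_of_neg_of_pos hc0 (by linarith)
  have h2 : -2 < c0 * (1 + t) := by
    have h3 : 1 + t < -2 / c0 := by linarith
    rw [lt_div_iff_of_neg hc0] at h3
    linarith
  have hr : |c0 * t + (1 + c0)| < 1 := by
    rw [abs_lt]
    constructor <;> linarith
  have hl := ((hasSum_geometric_of_abs_lt_one hr).tendsto_sum_nat.const_mul (c0 * t)).const_add 1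
  convert hl using 2
  have e : 1 - (c0 * t + (1 + c0)) = -(c0 * (1 + t)) := by ring
  have : 1 + t ≠ 0 := by linarith
  have := hc0.ne
  rw [e]
  field_simp
  ring
end

section
/- Let $c_0 > 0$ be a real number and define, for integers $m \ge n \ge 0$, $\mu_0^{m,n}(c_0) = (-c_0)^n \sum_{k=0}^{m-n} \binom{n-1+k}{k}(1+c_0)^k$ (with the convention $\mu_0^{m,0}(c_0) = 1$). Then for every real $t$ with $-\tfrac{2}{c_0} - 1 < t < -1$, the limit $\lim_{m\to\infty} \sum_{n=0}^{m} \mu_0^{m,n}(c_0)\,(-t)^n$ exists and equals $\tfrac{1}{1+t}$. -/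
open Filter Finset

lemma ham_sum_eq (c0 t : ℝ) (m : ℕ) :
    ∑ n ∈ Finset.range (m + 1), mu0 c0 m n * (-t) ^ n =
    (∑ j ∈ Finset.range m, (c0 * t) ^ (j + 1) *
      ∑ k ∈ Finset.range (m - j), ((j + k).choose k : ℝ) * (1 + c0) ^ k) + 1 := by
  rw [Finset.sum_range_succ']
  congr 1
  · refine Finset.sum_congr rfl fun j hj => ?_
    have hj' := Finset.mem_range.1 hj
    have h : m - (j + 1) + 1 = m - j := by omega
    have h2 : c0 * t = (-c0) * (-t) := by ring
    simp only [mu0, h, Nat.add_sub_cancel, Nat.succ_ne_zero, if_false]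
    rw [h2, mul_pow]
    ring
  · simp [mu0]

lemma ham_sum_succ (c0 t : ℝ) (m : ℕ) :
    ∑ n ∈ Finset.range (m + 1 + 1), mu0 c0 (m + 1) n * (-t) ^ n =
    ∑ n ∈ Finset.range (m + 1), mu0 c0 m n * (-t) ^ n
      + c0 * t * (1 + c0 * (1 + t)) ^ m := by
  have hr : 1 + c0 * (1 + t) = c0 * t + (1 + c0) := by ring
  rw [ham_sum_eq, ham_sum_eq, hr, add_pow, Finset.mul_sum]
  have h0 : ∑ j ∈ Finset.range m, (c0 * t) ^ (j + 1) *
      ∑ k ∈ Finset.range (m - j), ((j + k).choose k : ℝ) * (1 + c0) ^ k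
      = ∑ j ∈ Finset.range (m + 1), (c0 * t) ^ (j + 1) *
      ∑ k ∈ Finset.range (m - j), ((j + k).choose k : ℝ) * (1 + c0) ^ k := by
    rw [Finset.sum_range_succ _ m]; simp
  rw [h0, add_right_comm, ← Finset.sum_add_distrib]
  congr 1
  refine Finset.sum_congr rfl fun j hj => ?_
  have hj' : j ≤ m := Nat.lt_succ_iff.1 (Finset.mem_range.1 hj)
  have h : m + 1 - j = m - j + 1 := by omega
  have h3 : j + (m - j) = m := by omega
  rw [h, Finset.sum_range_succ, h3, Nat.choose_symm hj']
  ring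

theorem ham_series_converges_of_c0_pos (c0 : ℝ) (hc0 : 0 < c0) (t : ℝ)
    (ht1 : -2 / c0 - 1 < t) (ht2 : t < -1) :
    Tendsto (fun m : ℕ => ∑ n ∈ Finset.range (m + 1), mu0 c0 m n * (-t) ^ n)
      atTop (nhds (1 / (1 + t))) := by
  have ht : 1 + t ≠ 0 := by linarith
  have hc : c0 ≠ 0 := hc0.ne'
  have key : ∀ m : ℕ, ∑ n ∈ Finset.range (m + 1), mu0 c0 m n * (-t) ^ n
      = 1 / (1 + t) + t / (1 + t) * (1 + c0 * (1 + t)) ^ m := by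
    intro m
    induction m with
    | zero => simp [mu0]; field_simp
    | succ m ih =>
      rw [ham_sum_succ, ih, pow_succ]
      field_simp
      ring
  have h1 : -2 < c0 * (1 + t) := by
    have : -2 / c0 < 1 + t := by linarith
    rw [div_lt_iff₀ hc0] at this
    linarith
  have h2 : c0 * (1 + t) < 0 := mul_neg_of_pos_of_neg hc0 (by linarith)
  have h3 : |1 + c0 * (1 + t)| < 1 := by
    rw [abs_lt]; constructor <;> linarith
  have h4 := ((tendsto_pow_atTop_nhds_zero_of_abs_lt_one h3).const_mul
    (t / (1 + t))).const_add (1 / (1 + t))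
  simp only [mul_zero, add_zero] at h4
  simpa only [key] using h4
end

section
/- Define, for a nonzero real $c_0$ and integers $m \ge n \ge 0$, $\mu_0^{m,n}(c_0) = (-c_0)^n \sum_{k=0}^{m-n} \binom{n-1+k}{k}(1+c_0)^k$ (with the convention $\mu_0^{m,0}(c_0)=1$). Then: (i) for every real $t > -1$ there exists $c_0 < 0$ such that $\lim_{m\to\infty} \sum_{n=0}^{m} \mu_0^{m,n}(c_0)(-t)^n = \tfrac{1}{1+t}$; and (ii) for every real $t < -1$ there exists $c_0 > 0$ such that $\lim_{m\to\infty} \sum_{n=0}^{m} \mu_0^{m,n}(c_0)(-t)^n = \tfrac{1}{1+t}$. In other words, the introduction of the convergence-control parameter $c_0$ allows this power series to converge to $1/(1+t)$ at every point of the entire definition domain $\mathbb{R}\setminus\{-1\}$. -/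
open Filter Finset

theorem ham_aux_form (c t : ℝ) (m : ℕ) :
    ∑ n ∈ Finset.range (m + 1), mu0 c m n * (-t) ^ n =
      ∑ i ∈ Finset.range m, (c * t) ^ (i + 1) *
        (∑ k ∈ Finset.range (m - i), ((i + k).choose k : ℝ) * (1 + c) ^ k) + 1 := by
  rw [Finset.sum_range_succ']
  congr 1
  · apply Finset.sum_congr rfl
    intro i hi
    have hi' : i < m := Finset.mem_range.mp hi
    have h1 : m - (i + 1) + 1 = m - i := by omega
    have h2 : c * t = (-c) * (-t) := by ring
    simp only [mu0, Nat.add_eq_zero_iff, one_ne_zero, and_false, if_false, h1,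
      Nat.add_sub_cancel]
    rw [h2, mul_pow]
    ring
  · simp [mu0]

theorem ham_aux_step (c t : ℝ) (m : ℕ) :
    ∑ n ∈ Finset.range (m + 1 + 1), mu0 c (m + 1) n * (-t) ^ n =
      ∑ n ∈ Finset.range (m + 1), mu0 c m n * (-t) ^ n
        + c * t * (c * t + (1 + c)) ^ m := by
  rw [ham_aux_form, ham_aux_form]
  have e : ∑ i ∈ Finset.range m, (c * t) ^ (i + 1) *
        (∑ k ∈ Finset.range (m - i), ((i + k).choose k : ℝ) * (1 + c) ^ k) =
      ∑ i ∈ Finset.range (m + 1), (c * t) ^ (i + 1) *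
        (∑ k ∈ Finset.range (m - i), ((i + k).choose k : ℝ) * (1 + c) ^ k) := by
    rw [Finset.sum_range_succ _ m]; simp
  rw [e, add_pow, Finset.mul_sum, add_right_comm, ← Finset.sum_add_distrib]
  congr 1
  apply Finset.sum_congr rfl
  intro i hi
  have hi' : i < m + 1 := Finset.mem_range.mp hi
  have h1 : m + 1 - i = m - i + 1 := by omega
  have h2 : i + (m - i) = m := by omega
  rw [h1, Finset.sum_range_succ, h2, Nat.choose_symm (by omega : i ≤ m)]
  ring

theorem ham_aux_lim (t : ℝ) (ht : 1 + t ≠ 0) :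
    Tendsto (fun m : ℕ => ∑ n ∈ Finset.range (m + 1), mu0 (-1 / (1 + t)) m n * (-t) ^ n)
        atTop (nhds (1 / (1 + t))) := by
  rw [← tendsto_add_atTop_iff_nat 1]
  apply tendsto_const_nhds.congr
  intro m
  have hz : -1 / (1 + t) * t + (1 + -1 / (1 + t)) = 0 := by field_simp; ring
  induction m with
  | zero =>
    rw [ham_aux_form]
    simp
    field_simp
    ring
  | succ k ih =>
    rw [ham_aux_step, ← ih, hz]
    simp

theorem ham_series_converges_on_whole_domain :
    (∀ t : ℝ, -1 < t → ∃ c0 : ℝ, c0 < 0 ∧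
      Tendsto (fun m : ℕ => ∑ n ∈ Finset.range (m + 1), mu0 c0 m n * (-t) ^ n)
        atTop (nhds (1 / (1 + t)))) ∧
    (∀ t : ℝ, t < -1 → ∃ c0 : ℝ, 0 < c0 ∧
      Tendsto (fun m : ℕ => ∑ n ∈ Finset.range (m + 1), mu0 c0 m n * (-t) ^ n)
        atTop (nhds (1 / (1 + t)))) := by
  refine ⟨fun t ht => ⟨-1 / (1 + t), ?_, ham_aux_lim t (by intro h; linarith)⟩,
    fun t ht => ⟨-1 / (1 + t), ?_, ham_aux_lim t (by intro h; linarith)⟩⟩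
  · exact div_neg_of_neg_of_pos (by norm_num) (by linarith)
  · exact div_pos_of_neg_of_neg (by norm_num) (by linarith)
end

section
/- There exists a real constant $Q_2^{(C)}$ such that the polynomial $\varphi_2^{(C)}(y) = \tfrac{233y}{1890} - \tfrac{2179y^2}{3780} + \tfrac{83y^3}{126} - \tfrac{5y^4}{18} + \tfrac{y^5}{12} - \tfrac{y^6}{90}$ satisfies, for all real $y$, the differential equation $y^2 \dfrac{d^2\varphi_2^{(C)}}{dy^2}(y) = \varphi_1^{(C)}(y)\,S_1^{(C)}(y) + Q_2^{(C)} y^2$, where $\varphi_1^{(C)}(y) = -2y+2y^2$ and $S_1^{(C)}(y) = \tfrac{41y}{42} - y^2 + \tfrac{2y^3}{3} - \tfrac{y^4}{6}$, together with the boundary conditions $\varphi_2^{(C)}(0)=0$, $\varphi_2^{(C)}(1)=0$, and the normalization condition $-\int_0^1 \tfrac{1}{\epsilon}\,\varphi_2^{(C)}(\epsilon)\,d\epsilon = 0$. -/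
/-- First-order Chien perturbation solution `φ₁⁽ᶜ⁾`. -/
noncomputable def phi1C : ℝ → ℝ := fun y => -2 * y + 2 * y ^ 2

/-- First-order Chien perturbation solution `S₁⁽ᶜ⁾`. -/
noncomputable def S1C : ℝ → ℝ := fun y =>
  41 * y / 42 - y ^ 2 + 2 * y ^ 3 / 3 - y ^ 4 / 6

/-- Second-order Chien perturbation solution `φ₂⁽ᶜ⁾`. -/
noncomputable def phi2C : ℝ → ℝ := fun y =>
  233 * y / 1890 - 2179 * y ^ 2 / 3780 + 83 * y ^ 3 / 126 - 5 * y ^ 4 / 18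
    + y ^ 5 / 12 - y ^ 6 / 90

theorem chien_phi2 :
    ∃ Q2 : ℝ,
      (∀ y : ℝ, y ^ 2 * deriv (deriv phi2C) y = phi1C y * S1C y + Q2 * y ^ 2) ∧
      phi2C 0 = 0 ∧ phi2C 1 = 0 ∧
      -∫ x in (0:ℝ)..1, phi2C x / x = 0 := by
  have h1 : deriv phi2C = fun y => 233 / 1890 - 2179 * y / 1890 + 83 * y ^ 2 / 42
      - 10 * y ^ 3 / 9 + 5 * y ^ 4 / 12 - y ^ 5 / 15 := by
    funext y
    have h := ((((((hasDerivAt_id y).const_mul (233 / 1890 : ℝ)).sub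
      ((hasDerivAt_pow 2 y).const_mul (2179 / 3780 : ℝ))).add
      ((hasDerivAt_pow 3 y).const_mul (83 / 126 : ℝ))).sub
      ((hasDerivAt_pow 4 y).const_mul (5 / 18 : ℝ))).add
      ((hasDerivAt_pow 5 y).const_mul (1 / 12 : ℝ))).sub
      ((hasDerivAt_pow 6 y).const_mul (1 / 90 : ℝ))
    have h' := h.deriv
    convert h' using 1
    · congr 1
      funext z
      simp [phi2C]
      ring
    · norm_num
      ring
  have h2 : ∀ y : ℝ, deriv (deriv phi2C) y = - 2179 / 1890 + 83 * y / 21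
      - 10 * y ^ 2 / 3 + 5 * y ^ 3 / 3 - y ^ 4 / 3 := by
    intro y
    rw [h1]
    have h := ((((((hasDerivAt_const y (233 / 1890 : ℝ))).sub
      ((hasDerivAt_id y).const_mul (2179 / 1890 : ℝ))).add
      ((hasDerivAt_pow 2 y).const_mul (83 / 42 : ℝ))).sub
      ((hasDerivAt_pow 3 y).const_mul (10 / 9 : ℝ))).add
      ((hasDerivAt_pow 4 y).const_mul (5 / 12 : ℝ))).sub
      ((hasDerivAt_pow 5 y).const_mul (1 / 15 : ℝ))
    have h' := h.deriv
    convert h' using 1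
    · congr 1
      funext z
      simp
      ring
    · norm_num
      ring
  refine ⟨1511 / 1890, ?_, ?_, ?_, ?_⟩
  · intro y
    rw [h2, phi1C, S1C]
    ring
  · simp [phi2C]
  · norm_num [phi2C]
  · have h3 : ∫ x in (0:ℝ)..1, phi2C x / x = 0 := by
      have hF : ∀ x ∈ Set.uIcc (0:ℝ) 1, HasDerivAt
          (fun x : ℝ => 233 / 1890 * x - 2179 / 7560 * x ^ 2 + 83 / 378 * x ^ 3
            - 5 / 72 * x ^ 4 + 1 / 60 * x ^ 5 - 1 / 540 * x ^ 6)
          (233 / 1890 - 2179 * x / 3780 + 83 * x ^ 2 / 126 - 5 * x ^ 3 / 18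
            + x ^ 4 / 12 - x ^ 5 / 90) x := by
        intro y _
        have h := ((((((hasDerivAt_id y).const_mul (233 / 1890 : ℝ)).sub
          ((hasDerivAt_pow 2 y).const_mul (2179 / 7560 : ℝ))).add
          ((hasDerivAt_pow 3 y).const_mul (83 / 378 : ℝ))).sub
          ((hasDerivAt_pow 4 y).const_mul (5 / 72 : ℝ))).add
          ((hasDerivAt_pow 5 y).const_mul (1 / 60 : ℝ))).sub
          ((hasDerivAt_pow 6 y).const_mul (1 / 540 : ℝ))
        refine HasDerivAt.congr_deriv (f := fun x : ℝ => _) h ?_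
        norm_num
        ring
      have h4 := intervalIntegral.integral_eq_sub_of_hasDerivAt hF
        (Continuous.intervalIntegrable (by fun_prop) _ _)
      rw [intervalIntegral.integral_congr_uIoo (g := fun x : ℝ =>
        233 / 1890 - 2179 * x / 3780 + 83 * x ^ 2 / 126 - 5 * x ^ 3 / 18
            + x ^ 4 / 12 - x ^ 5 / 90), h4]
      · norm_num
      · intro x hx
        have hx0 : x ≠ 0 := by
          have := hx.1
          simp at this
          exact this.ne'
        simp only [phi2C]
        field_simp
        try ring
    rw [h3, neg_zero]
end

section
/- Let $\zeta, \lambda, \mu \in \mathbb{R}$ with $\lambda \ne 1$ and $\mu \ne 1$. Suppose $(\varphi_m^{(P)})_{m\ge 1}$, $(S_m^{(P)})_{m\ge 0}$ are twice-differentiable functions from $\mathbb{R}$ to $\mathbb{R}$ and $(Q_m^{(P)})_{m\ge 1}$, $(W_m^{(P)})_{m\ge 1}$ are real constants, with $S_0^{(P)} = 0$, satisfying for every $m \ge 1$ and every $y \in [0,1]$: $y^2 (\varphi_m^{(P)})''(y) = \sum_{i=1}^{m}\varphi_i^{(P)}(y)\,S_{m-i}^{(P)}(y) + Q_m^{(P)}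 y^2$; $y^2 (S_m^{(P)})''(y) = -\tfrac12\sum_{i=1}^{m}\varphi_i^{(P)}(y)\,\varphi_{m+1-i}^{(P)}(y)$; $\varphi_m^{(P)}(0) = S_m^{(P)}(0) = 0$; $\varphi_m^{(P)}(1) = \tfrac{\lambda}{\lambda-1}(\varphi_m^{(P)})'(1)$; $S_m^{(P)}(1) = \tfrac{\mu}{\mu-1}(S_m^{(P)})'(1)$; and $-\int_0^1 \tfrac{1}{\varepsilon}\varphi_m^{(P)}(\varepsilon)\,d\varepsilon = W_m^{(P)}$. Define $\tilde\varphi_0 = 0$, $\tilde S_0 = 0$, $\tilde Q_0 = 0$, $\tilde W_0 = 0$, and for $m \ge 1$: $\tilde\varphi_m = \zeta^{2m-1}\varphi_m^{(P)}$, $\tilde S_m = \zeta^{2m}S_m^{(P)}$, $\tilde Q_m = \zeta^{2m-1}Q_m^{(P)}$, $\tilde W_m = \zeta^{2m-1}W_m^{(P)}$. Then for every $m \ge 1$ and every $y \in [0,1]$ the HAM $m$th-order deformation equations with convergence-control parameter $c_0 = -1$ hold: $y^2\big(\tilde\varphi_m - \chi_m\tilde\varphi_{m-1}\big)''(y) =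 -\Big[y^2(\tilde\varphi_{m-1})''(y) - \sum_{i=1}^{m}\tilde\varphi_i(y)\tilde S_{m-i}(y) - \tilde Q_m y^2\Big]$ and $y^2\big(\tilde S_m - \chi_m\tilde S_{m-1}\big)''(y) = -\Big[y^2(\tilde S_{m-1})''(y) + \tfrac12\sum_{i=1}^{m}\tilde\varphi_i(y)\tilde\varphi_{m+1-i}(y)\Big]$, where $\chi_1 = 0$ and $\chi_m = 1$ for $m \ge 2$; moreover $\tilde\varphi_m(0) = \tilde S_m(0) = 0$, $\tilde\varphi_m(1) = \tfrac{\lambda}{\lambda-1}(\tilde\varphi_m)'(1)$, $\tilde S_m(1) = \tfrac{\mu}{\mu-1}(\tilde S_m)'(1)$, and $-\int_0^1 \tfrac{1}{\varepsilon}\tilde\varphi_m(\varepsilon)\,d\varepsilon = \tilde W_m$. -/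
open Finset

/-- `χ_m` in the HAM high-order deformation equations: `χ₁ = 0`, `χ_m = 1` for `m ≥ 2`. -/
noncomputable def chiHAM (m : ℕ) : ℝ := if m ≤ 1 then 0 else 1

/-- The perturbation method for an arbitrary perturbation quantity `ζ` applied to the
Von Kármán circular-plate equations is a special case of the HAM with
convergence-control parameter `c₀ = -1`. -/
theorem perturbation_is_special_case_of_HAM
    (ζ lam mu : ℝ) (hlam : lam ≠ 1) (hmu : mu ≠ 1)
    (φ S : ℕ → ℝ → ℝ) (Q W : ℕ → ℝ)
    (hφdiff : ∀ m, Differentiable ℝ (φ m) ∧ Differentiable ℝ (deriv (φ m)))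
    (hSdiff : ∀ m, Differentiable ℝ (S m) ∧ Differentiable ℝ (deriv (S m)))
    (hS0 : ∀ y : ℝ, S 0 y = 0)
    (hφeq : ∀ m, 1 ≤ m → ∀ y ∈ Set.Icc (0:ℝ) 1,
      y ^ 2 * deriv (deriv (φ m)) y
        = (∑ i ∈ Finset.Icc 1 m, φ i y * S (m - i) y) + Q m * y ^ 2)
    (hSeq : ∀ m, 1 ≤ m → ∀ y ∈ Set.Icc (0:ℝ) 1,
      y ^ 2 * deriv (deriv (S m)) y
        = -(1 / 2) * ∑ i ∈ Finset.Icc 1 m, φ i y * φ (m + 1 - i) y)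
    (hbc0 : ∀ m, 1 ≤ m → φ m 0 = 0 ∧ S m 0 = 0)
    (hbcφ1 : ∀ m, 1 ≤ m → φ m 1 = lam / (lam - 1) * deriv (φ m) 1)
    (hbcS1 : ∀ m, 1 ≤ m → S m 1 = mu / (mu - 1) * deriv (S m) 1)
    (hW : ∀ m, 1 ≤ m → -∫ x in (0:ℝ)..1, φ m x / x = W m)
    (tφ tS : ℕ → ℝ → ℝ) (tQ tW : ℕ → ℝ)
    (htφ : ∀ y : ℝ, tφ 0 y = 0) (htS : ∀ y : ℝ, tS 0 y = 0)
    (htQ0 : tQ 0 = 0) (htW0 : tW 0 = 0)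
    (htφm : ∀ m, 1 ≤ m → ∀ y : ℝ, tφ m y = ζ ^ (2 * m - 1) * φ m y)
    (htSm : ∀ m, 1 ≤ m → ∀ y : ℝ, tS m y = ζ ^ (2 * m) * S m y)
    (htQm : ∀ m, 1 ≤ m → tQ m = ζ ^ (2 * m - 1) * Q m)
    (htWm : ∀ m, 1 ≤ m → tW m = ζ ^ (2 * m - 1) * W m) :
    ∀ m, 1 ≤ m →
      (∀ y ∈ Set.Icc (0:ℝ) 1,
        y ^ 2 * deriv (deriv (fun z => tφ m z - chiHAM m * tφ (m - 1) z)) y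
          = -(y ^ 2 * deriv (deriv (tφ (m - 1))) y
              - (∑ i ∈ Finset.Icc 1 m, tφ i y * tS (m - i) y) - tQ m * y ^ 2)) ∧
      (∀ y ∈ Set.Icc (0:ℝ) 1,
        y ^ 2 * deriv (deriv (fun z => tS m z - chiHAM m * tS (m - 1) z)) y
          = -(y ^ 2 * deriv (deriv (tS (m - 1))) y
              + (1 / 2) * ∑ i ∈ Finset.Icc 1 m, tφ i y * tφ (m + 1 - i) y)) ∧
      tφ m 0 = 0 ∧ tS m 0 = 0 ∧
      tφ m 1 = lam / (lam - 1) * deriv (tφ m) 1 ∧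
      tS m 1 = mu / (mu - 1) * deriv (tS m) 1 ∧
      -∫ x in (0:ℝ)..1, tφ m x / x = tW m := by
  have fφ : ∀ m, 1 ≤ m → tφ m = fun y => ζ ^ (2 * m - 1) * φ m y :=
    fun m hm => funext (htφm m hm)
  have fS : ∀ m, tS m = fun y => ζ ^ (2 * m) * S m y := by
    intro m
    rcases Nat.eq_zero_or_pos m with rfl | hm
    · funext y; simp [htS, hS0]
    · exact funext (htSm m hm)
  have f0 : tφ 0 = fun _ => 0 := funext htφ
  have s0 : tS 0 = fun _ => 0 := funext htS
  have dφ : ∀ m, 1 ≤ m → deriv (tφ m) = fun y => ζ ^ (2 * m - 1) * deriv (φ m) y := by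
    intro m hm
    funext y
    rw [fφ m hm]
    exact deriv_const_mul _ ((hφdiff m).1 y)
  have dS : ∀ m, deriv (tS m) = fun y => ζ ^ (2 * m) * deriv (S m) y := by
    intro m
    funext y
    rw [fS m]
    exact deriv_const_mul _ ((hSdiff m).1 y)
  have ddφ : ∀ m, 1 ≤ m → ∀ y,
      deriv (deriv (tφ m)) y = ζ ^ (2 * m - 1) * deriv (deriv (φ m)) y := by
    intro m hm y
    rw [dφ m hm]
    exact deriv_const_mul _ ((hφdiff m).2 y)
  have ddS : ∀ m y, deriv (deriv (tS m)) y = ζ ^ (2 * m) * deriv (deriv (S m)) y := by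
    intro m y
    rw [dS m]
    exact deriv_const_mul _ ((hSdiff m).2 y)
  have Dφ : ∀ m, Differentiable ℝ (tφ m) ∧ Differentiable ℝ (deriv (tφ m)) := by
    intro m
    rcases Nat.eq_zero_or_pos m with rfl | hm
    · rw [f0]; simp
    · rw [dφ m hm, fφ m hm]
      exact ⟨(hφdiff m).1.const_mul _, (hφdiff m).2.const_mul _⟩
  have DS : ∀ m, Differentiable ℝ (tS m) ∧ Differentiable ℝ (deriv (tS m)) := by
    intro m
    rw [dS m, fS m]
    exact ⟨(hSdiff m).1.const_mul _, (hSdiff m).2.const_mul _⟩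
  have key : ∀ (f g : ℝ → ℝ) (c : ℝ),
      (Differentiable ℝ f ∧ Differentiable ℝ (deriv f)) →
      (Differentiable ℝ g ∧ Differentiable ℝ (deriv g)) → ∀ y,
      deriv (deriv (fun z => f z - c * g z)) y
        = deriv (deriv f) y - c * deriv (deriv g) y := by
    intro f g c hf hg y
    have h1 : deriv (fun z => f z - c * g z) = fun z => deriv f z - c * deriv g z := by
      funext z
      exact ((hf.1 z).hasDerivAt.sub ((hg.1 z).hasDerivAt.const_mul c)).deriv
    rw [h1]
    exact ((hf.2 y).hasDerivAt.sub ((hg.2 y).hasDerivAt.const_mul c)).deriv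
  have chi : ∀ (T : ℕ → ℝ → ℝ), T 0 = (fun _ => 0) → ∀ m, 1 ≤ m → ∀ y,
      chiHAM m * deriv (deriv (T (m - 1))) y = deriv (deriv (T (m - 1))) y := by
    intro T hT m hm y
    by_cases h : m ≤ 1
    · obtain rfl : m = 1 := le_antisymm h hm
      simp [hT]
    · simp [chiHAM, h]
  intro m hm
  refine ⟨?_, ?_, ?_, ?_, ?_, ?_, ?_⟩
  · intro y hy
    have hs : ∑ i ∈ Finset.Icc 1 m, tφ i y * tS (m - i) y
        = ζ ^ (2 * m - 1) * ∑ i ∈ Finset.Icc 1 m, φ i y * S (m - i) y := by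
      rw [Finset.mul_sum]
      refine Finset.sum_congr rfl fun i hi => ?_
      obtain ⟨h1, h2⟩ := Finset.mem_Icc.1 hi
      rw [fφ i h1, fS (m - i), show 2 * m - 1 = (2 * i - 1) + 2 * (m - i) by omega, pow_add]
      ring
    rw [key _ _ _ (Dφ m) (Dφ (m - 1)), chi tφ f0 m hm, hs, htQm m hm, ddφ m hm]
    linear_combination ζ ^ (2 * m - 1) * hφeq m hm y hy
  · intro y hy
    have hs : ∑ i ∈ Finset.Icc 1 m, tφ i y * tφ (m + 1 - i) y
        = ζ ^ (2 * m) * ∑ i ∈ Finset.Icc 1 m, φ i y * φ (m + 1 - i) y := by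
      rw [Finset.mul_sum]
      refine Finset.sum_congr rfl fun i hi => ?_
      obtain ⟨h1, h2⟩ := Finset.mem_Icc.1 hi
      rw [fφ i h1, fφ (m + 1 - i) (by omega),
        show 2 * m = (2 * i - 1) + (2 * (m + 1 - i) - 1) by omega, pow_add]
      ring
    rw [key _ _ _ (DS m) (DS (m - 1)), chi tS s0 m hm, hs, ddS m]
    linear_combination ζ ^ (2 * m) * hSeq m hm y hy
  · rw [htφm m hm, (hbc0 m hm).1, mul_zero]
  · rw [htSm m hm, (hbc0 m hm).2, mul_zero]
  · rw [htφm m hm, dφ m hm]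
    linear_combination ζ ^ (2 * m - 1) * hbcφ1 m hm
  · rw [htSm m hm, dS m]
    linear_combination ζ ^ (2 * m) * hbcS1 m hm
  · rw [htWm m hm, ← hW m hm, fφ m hm]
    simp only [mul_div_assoc, intervalIntegral.integral_const_mul]
    ring
end
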